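/- Let Q be a positive-definite integral lattice. If Q contains three pairwise orthogonal norm-2 vectors, then either Q contains a norm-2 vector orthogonal to every norm-1 vector of Q, or Q contains two orthogonal norm-1 vectors and a norm-2 vector orthogonal to both. -/

import Mathlib

/-!
If no norm-2 vector is orthogonal to all norm-1 vectors, then `u` pairs nontrivially with some
norm-1 vector, and positivity forces a splitting `u = x + y` into orthogonal norm-1 vectors
(`exists_split_of_norm_two`). A norm-2 vector orthogonal to `x + y` is either orthogonal to both
`x` and `y`, or equal to `±(x - y)` (`orth_or_eq_sub`): the vectors `±(x - y)` also have norm 2, so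
this is the equality case of Cauchy–Schwarz. Two vectors of the second kind are never orthogonal,
so at least one of `v`, `w` is orthogonal to both `x` and `y`.
-/

/-- A norm-2 vector that is not orthogonal to some norm-1 vector is a sum of two orthogonal
norm-1 vectors. -/
theorem exists_split_of_norm_two {Q : Type*} [AddCommGroup Q] [Module ℤ Q]
    (B : LinearMap.BilinForm ℤ Q) (hsymm : ∀ x y : Q, B x y = B y x)
    (hnn : ∀ x : Q, 0 ≤ B x x) {u t : Q} (hu : B u u = 2) (ht : B t t = 1)
    (hut : B u t ≠ 0) :
    ∃ x y : Q, u = x + y ∧ B x x = 1 ∧ B y y = 1 ∧ B x y = 0 := by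
  have key : ∀ s : Q, B s s = 1 → 0 < B u s →
      ∃ x y : Q, u = x + y ∧ B x x = 1 ∧ B y y = 1 ∧ B x y = 0 := by
    intro s hs hpos
    -- The norm `3 - 2 * B u s` of `u - s` is nonnegative, which forces `B u s = 1`.
    have h := hnn (u - s)
    have hsu := hsymm s u
    simp only [map_sub, LinearMap.sub_apply] at h
    refine ⟨s, u - s, by abel, hs, ?_, ?_⟩ <;> simp only [map_sub, LinearMap.sub_apply] <;> omega
  rcases lt_or_gt_of_ne hut with h | h
  · exact key (-t) (by simpa using ht) (by simpa using h)
  · exact key t ht h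

/-- A norm-2 vector orthogonal to the sum of two orthogonal norm-1 vectors `x`, `y` is orthogonal
to both of them or equal to `±(x - y)`. -/
theorem orth_or_eq_sub {Q : Type*} [AddCommGroup Q] [Module ℤ Q]
    (B : LinearMap.BilinForm ℤ Q) (hsymm : ∀ x y : Q, B x y = B y x)
    (hpos : ∀ x : Q, x ≠ 0 → 0 < B x x) {x y v : Q} (hx : B x x = 1) (hy : B y y = 1)
    (hxy : B x y = 0) (hv : B v v = 2) (hvxy : B v (x + y) = 0) :
    (B v x = 0 ∧ B v y = 0) ∨ v = x - y ∨ v = y - x := by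
  have hyx := hsymm y x
  have hxv := hsymm x v
  have hyv := hsymm y v
  rw [map_add] at hvxy
  rcases lt_trichotomy (B v x) 0 with h | h | h
  · right; right
    by_contra hne
    have h1 := hpos (v - (y - x)) (sub_ne_zero.mpr hne)
    simp only [map_sub, LinearMap.sub_apply] at h1
    omega
  · left
    exact ⟨h, by omega⟩
  · right; left
    by_contra hne
    have h1 := hpos (v - (x - y)) (sub_ne_zero.mpr hne)
    simp only [map_sub, LinearMap.sub_apply] at h1
    omega

/-- If Q contains three pairwise orthogonal norm-2 vectors, then either
Q contains a norm-2 vector orthogonal to every norm-1 vector of Q, or Q contains two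
orthogonal norm-1 vectors and a norm-2 vector orthogonal to both. -/
theorem three_orth_norm_two (Q : Type*) [AddCommGroup Q] [Module ℤ Q]
    [Module.Free ℤ Q] [Module.Finite ℤ Q]
    (B : LinearMap.BilinForm ℤ Q)
    (hsymm : ∀ x y : Q, B x y = B y x)
    (hpos : ∀ x : Q, x ≠ 0 → 0 < B x x)
    (u v w : Q) (hu : B u u = 2) (hv : B v v = 2) (hw : B w w = 2)
    (huv : B u v = 0) (huw : B u w = 0) (hvw : B v w = 0) :
    (∃ z : Q, B z z = 2 ∧ ∀ t : Q, B t t = 1 → B z t = 0) ∨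
    (∃ x y z : Q, B x x = 1 ∧ B y y = 1 ∧ B z z = 2 ∧
      B x y = 0 ∧ B z x = 0 ∧ B z y = 0) := by
  by_cases hz : ∀ t : Q, B t t = 1 → B u t = 0
  · exact Or.inl ⟨u, hu, hz⟩
  right
  push Not at hz
  obtain ⟨t, ht, hut⟩ := hz
  have hnn : ∀ a : Q, 0 ≤ B a a := by
    intro a
    by_cases ha : a = 0
    · simp [ha]
    · exact (hpos a ha).le
  obtain ⟨x, y, rfl, hx, hy, hxy⟩ := exists_split_of_norm_two B hsymm hnn hu ht hut
  rcases orth_or_eq_sub B hsymm hpos hx hy hxy hv ((hsymm _ _).trans huv) with h | hv'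
  · exact ⟨x, y, v, hx, hy, hv, hxy, h.1, h.2⟩
  rcases orth_or_eq_sub B hsymm hpos hx hy hxy hw ((hsymm _ _).trans huw) with h | hw'
  · exact ⟨x, y, w, hx, hy, hw, hxy, h.1, h.2⟩
  -- Otherwise `v` and `w` are both `±(x - y)`, so `B v w = ±2`, contradicting orthogonality.
  exfalso
  have hyx := hsymm y x
  rcases hv' with rfl | rfl <;> rcases hw' with rfl | rfl <;>
    simp only [map_sub, LinearMap.sub_apply] at hvw <;> omega
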